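/- Let X be a real n × m matrix, Y a real n × q matrix, and λ ≥ 0. Then the infimum over all pairs of real m × q matrices (G, H) of ‖X(G ⊙ H) − Y‖_F² + λ(‖G‖_F² + ‖H‖_F²) equals the infimum over all real m × q matrices W of ‖XW − Y‖_F² + 2λ Σ_{i,j} |W_{ij}|. -/

import Mathlib

open Matrix

/-- Squared Frobenius norm of a real matrix. -/
noncomputable def frobSq {n q : ℕ} (A : Matrix (Fin n) (Fin q) ℝ) : ℝ :=
  ∑ i, ∑ j, (A i j) ^ 2

/-!
For real `g`, `h` one has `2 |g h| ≤ g² + h²`, and every real `w` has a factorization `w = g h`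
attaining equality, namely `g = √|w|`, `h = ±√|w|`. Applied entrywise, the ridge penalty
`‖G‖² + ‖H‖²` is at least `2 ‖G ⊙ H‖₁`, and its minimum over the fibre `G ⊙ H = W` is `2 ‖W‖₁`.
Since the loss sees `(G, H)` only through `W = G ⊙ H`, minimizing the smooth objective over each
fibre yields exactly the `ℓ¹`-penalized objective at `W`.
-/

theorem two_mul_abs_mul_le_sq_add_sq {R : Type*} [CommRing R] [LinearOrder R]
    [IsStrictOrderedRing R] (g h : R) : 2 * |g * h| ≤ g ^ 2 + h ^ 2 := by
  simpa only [abs_mul, sq_abs, mul_assoc] using two_mul_le_add_sq |g| |h|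

theorem exists_mul_eq_and_sq_add_sq_eq (w : ℝ) :
    ∃ g h : ℝ, g * h = w ∧ g ^ 2 + h ^ 2 = 2 * |w| := by
  have sq_sqrt_abs : √|w| ^ 2 = |w| := Real.sq_sqrt (abs_nonneg w)
  rcases le_total 0 w with hw | hw
  · refine ⟨√|w|, √|w|, ?_, by rw [sq_sqrt_abs, two_mul]⟩
    rw [← sq, sq_sqrt_abs, abs_of_nonneg hw]
  · refine ⟨√|w|, -√|w|, ?_, by rw [neg_sq, sq_sqrt_abs, two_mul]⟩
    rw [mul_neg, ← sq, sq_sqrt_abs, abs_of_nonpos hw, neg_neg]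

section Penalties

variable {ι κ : Type*} [Fintype ι] [Fintype κ]

theorem two_mul_sum_abs_hadamard_le {R : Type*} [CommRing R] [LinearOrder R]
    [IsStrictOrderedRing R] (G H : Matrix ι κ R) :
    2 * ∑ i, ∑ j, |(G ⊙ H) i j| ≤ ∑ i, ∑ j, G i j ^ 2 + ∑ i, ∑ j, H i j ^ 2 := by
  simp only [Finset.mul_sum, ← Finset.sum_add_distrib, hadamard_apply]
  gcongr with i _ j _
  exact two_mul_abs_mul_le_sq_add_sq (G i j) (H i j)

theorem exists_hadamard_eq_and_sum_sq_add_sum_sq_eq (W : Matrix ι κ ℝ) :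
    ∃ G H : Matrix ι κ ℝ, G ⊙ H = W ∧
      ∑ i, ∑ j, G i j ^ 2 + ∑ i, ∑ j, H i j ^ 2 = 2 * ∑ i, ∑ j, |W i j| := by
  choose g h mul_eq sq_add_sq_eq using exists_mul_eq_and_sq_add_sq_eq
  refine ⟨W.map g, W.map h, ?_, ?_⟩
  · ext i j
    exact mul_eq (W i j)
  · simp only [map_apply, Finset.mul_sum, ← Finset.sum_add_distrib, sq_add_sq_eq]

/-- The smooth objective: a loss `L` evaluated at `G ⊙ H`, plus `lam` times the sum of the squared
Frobenius norms of `G` and `H`. -/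
noncomputable def hadamardRidge (L : Matrix ι κ ℝ → ℝ) (lam : ℝ) (G H : Matrix ι κ ℝ) : ℝ :=
  L (G ⊙ H) + lam * (∑ i, ∑ j, G i j ^ 2 + ∑ i, ∑ j, H i j ^ 2)

/-- The `ℓ¹`-penalized objective with loss `L`. The factor `2` makes its penalty the minimum of that
of `hadamardRidge` over the factorizations `W = G ⊙ H`. -/
noncomputable def lasso (L : Matrix ι κ ℝ → ℝ) (lam : ℝ) (W : Matrix ι κ ℝ) : ℝ :=
  L W + 2 * lam * ∑ i, ∑ j, |W i j|

variable (L : Matrix ι κ ℝ → ℝ) {lam : ℝ}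

theorem le_lasso (hlam : 0 ≤ lam) (W : Matrix ι κ ℝ) : L W ≤ lasso L lam W :=
  le_add_of_nonneg_right (by positivity)

theorem lasso_hadamard_le_hadamardRidge (hlam : 0 ≤ lam) (G H : Matrix ι κ ℝ) :
    lasso L lam (G ⊙ H) ≤ hadamardRidge L lam G H := by
  rw [lasso, hadamardRidge, mul_comm 2 lam, mul_assoc]
  gcongr
  exact two_mul_sum_abs_hadamard_le G H

theorem exists_hadamardRidge_eq_lasso (lam : ℝ) (W : Matrix ι κ ℝ) :
    ∃ G H : Matrix ι κ ℝ, hadamardRidge L lam G H = lasso L lam W := by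
  obtain ⟨G, H, hadamard_eq, penalty_eq⟩ := exists_hadamard_eq_and_sum_sq_add_sum_sq_eq W
  refine ⟨G, H, ?_⟩
  rw [hadamardRidge, lasso, hadamard_eq, penalty_eq, mul_comm 2 lam, mul_assoc]

theorem lowerBounds_hadamardRidge_eq_lowerBounds_lasso (hlam : 0 ≤ lam) :
    lowerBounds {c | ∃ G H, c = hadamardRidge L lam G H} =
      lowerBounds {c | ∃ W, c = lasso L lam W} := by
  ext a
  constructor
  · rintro ha _ ⟨W, rfl⟩
    obtain ⟨G, H, ridge_eq⟩ := exists_hadamardRidge_eq_lasso L lam W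
    exact ha ⟨G, H, ridge_eq.symm⟩
  · rintro ha _ ⟨G, H, rfl⟩
    exact (ha ⟨G ⊙ H, rfl⟩).trans (lasso_hadamard_le_hadamardRidge L hlam G H)

theorem hadamard_ridge_eq_lasso_inf_general (hL : BddBelow (Set.range L)) (hlam : 0 ≤ lam) :
    IsGLB {c | ∃ G H, c = hadamardRidge L lam G H} (sInf {c | ∃ W, c = lasso L lam W}) := by
  have lasso_bddBelow : BddBelow {c | ∃ W, c = lasso L lam W} := by
    obtain ⟨b, hb⟩ := hL
    refine ⟨b, ?_⟩
    rintro _ ⟨W, rfl⟩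
    exact (hb ⟨W, rfl⟩).trans (le_lasso L hlam W)
  rw [isGLB_congr (lowerBounds_hadamardRidge_eq_lowerBounds_lasso L hlam)]
  exact isGLB_csInf ⟨_, 0, rfl⟩ lasso_bddBelow

end Penalties

theorem frobSq_nonneg {n q : ℕ} (A : Matrix (Fin n) (Fin q) ℝ) : 0 ≤ frobSq A := by
  unfold frobSq
  positivity

theorem hadamard_ridge_eq_lasso_inf {n m q : ℕ}
    (X : Matrix (Fin n) (Fin m) ℝ) (Y : Matrix (Fin n) (Fin q) ℝ)
    (lam : ℝ) (hlam : 0 ≤ lam) :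
    sInf {c : ℝ | ∃ G H : Matrix (Fin m) (Fin q) ℝ,
        c = frobSq (X * Matrix.hadamard G H - Y) + lam * (frobSq G + frobSq H)}
      =
    sInf {c : ℝ | ∃ W : Matrix (Fin m) (Fin q) ℝ,
        c = frobSq (X * W - Y) + 2 * lam * ∑ i, ∑ j, |W i j|} := by
  have loss_bddBelow :
      BddBelow (Set.range fun W : Matrix (Fin m) (Fin q) ℝ ↦ frobSq (X * W - Y)) :=
    ⟨0, Set.forall_mem_range.2 fun W ↦ frobSq_nonneg (X * W - Y)⟩
  exact (hadamard_ridge_eq_lasso_inf_general _ loss_bddBelow hlam).csInf_eq ⟨_, 0, 0, rfl⟩
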